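/- Let n ≥ 2, let π/2 < D < π, and let C ⊆ S^n be a solid D-maximal set. Let x, y ∈ ∂C with x ≠ y be strongly regular boundary points, and let N_x and N_y be exterior unit normals of C at x and at y respectively. Then there exist η ∈ {−1,1} and λ ∈ ℝ such that N_x − η·N_y = λ·(x − y) in ℝ^{n+1}. -/

import Mathlib

/-!
The proof uses two-point symmetrization (polarization). Let `ρ` be the reflection in the linear
hyperplane orthogonal to `u = x - y`, which swaps `x` and `y`. Since `ρ N_y` differs from `N_y` by a
multiple of `x - y`, it is enough to show `N_x = ± ρ N_y`.

Two facts about volume maximizers `X` of diameter at most `D` are needed. A non-interior point `p`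
of `X` has a point of `X` at distance exactly `D` (`exists_far`), because otherwise a small ball
around `p` could be added, gaining volume: nonempty open sets have positive volume (`sphVol_pos`)
and the total volume is finite (`sphVol_lt_top`). If moreover `X` contains a ball touching its
boundary at `p` with exterior normal `N`, that point must be `cos D • p - sin D • N`
(`far_unique`).

Suppose `N_x ≠ -ρ N_y`, and let `T` be the polarization of `C` towards the side of `x`. It contains
`x` and `y`, its diameter is at most `D` (`polarize_diam`), and its volume is at least that of `C`
(`polarize_vol`). By `far_unique`, the sets `C` and `ρ C` lie in the balls of radius `D` around
`cos D • x - sin D • N_x` and `cos D • x - sin D • ρ N_y`, and the direction `N_x + ρ N_y` leaves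
both balls at `x`; so `x` is not interior to `T ⊆ C ∪ ρ C` (`not_interior`). Hence there is `w ∈ T`
at distance `D` from `x`. As `w` is at distance at most `D` from `y ∈ T`, it lies on the side of
`y`, where `T` is `C ∩ ρ C`. Thus `w` and `ρ w` belong to `C` and have distance `D` from `x` and `y`
respectively, and `far_unique` at both points gives `N_x = ρ N_y`.
-/

open MeasureTheory

noncomputable section

/-- Euclidean space `ℝ^{n+1}`. -/
abbrev Esp (n : ℕ) : Type := EuclideanSpace ℝ (Fin (n + 1))

/-- The unit sphere `S^n ⊆ ℝ^{n+1}`, as a subtype. -/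
abbrev Sph (n : ℕ) : Type := Metric.sphere (0 : Esp n) 1

/-- Geodesic distance `d(x,y) = arccos ⟨x,y⟩` on the sphere. -/
def gd {n : ℕ} (x y : Sph n) : ℝ :=
  Real.arccos (inner (𝕜 := ℝ) (x : Esp n) (y : Esp n))

/-- Closed geodesic ball `B(z,r) = {x ∈ Sⁿ : d(x,z) ≤ r}`. -/
def sphBall {n : ℕ} (z : Sph n) (r : ℝ) : Set (Sph n) := {x | gd x z ≤ r}

/-- Geodesic diameter `diam X = sup {d(x,y) : x, y ∈ X}`. -/
def sphDiam {n : ℕ} (X : Set (Sph n)) : ℝ :=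
  sSup {r | ∃ x ∈ X, ∃ y ∈ X, r = gd x y}

/-- Spherical volume: the `n`-dimensional (Hausdorff) surface measure on `S^n`. -/
def sphVol (n : ℕ) : Measure (Sph n) := μH[(n : ℝ)]

/-- A set `C ⊆ S^n` is `D`-maximal: compact, of geodesic diameter at most `D`, and of
maximal spherical volume among compact sets of diameter at most `D`. -/
def DMaximal (n : ℕ) (D : ℝ) (C : Set (Sph n)) : Prop :=
  IsCompact C ∧ sphDiam C ≤ D ∧
    sphVol n C =
      sSup {v | ∃ X : Set (Sph n), IsCompact X ∧ sphDiam X ≤ D ∧ v = sphVol n X}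

/-- A nonempty compact set `C ⊆ S^n`, `C ≠ S^n`, is solid if it equals the closure
of its interior (in the topology of `S^n`). -/
def Solid {n : ℕ} (C : Set (Sph n)) : Prop :=
  C.Nonempty ∧ IsCompact C ∧ C ≠ Set.univ ∧ C = closure (interior C)

/-- `x` is a strongly regular boundary point of `C`: `x ∈ ∂C` and there are `r > 0`
and `z ∈ C` with `B(z,r) ⊆ C` and `d(x,z) = r`. -/
def StronglyRegular {n : ℕ} (C : Set (Sph n)) (x : Sph n) : Prop :=
  x ∈ frontier C ∧ ∃ r > 0, ∃ z ∈ C, sphBall z r ⊆ C ∧ gd x z = r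

/-- `N` is an exterior unit normal of `C` at `x`: `‖N‖ = 1`, `⟨N,x⟩ = 0`, and there
are strong-regularity witnesses `r > 0`, `z ∈ C` with `B(z,r) ⊆ C`, `d(x,z) = r` and
`z = (cos r) • x − (sin r) • N`. -/
def ExtUnitNormal {n : ℕ} (C : Set (Sph n)) (x : Sph n) (N : Esp n) : Prop :=
  ‖N‖ = 1 ∧ inner (𝕜 := ℝ) N (x : Esp n) = 0 ∧
    ∃ r > 0, ∃ z ∈ C, sphBall z r ⊆ C ∧ gd x z = r ∧
      (z : Esp n) = Real.cos r • (x : Esp n) - Real.sin r • N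

/-! ### Positivity and finiteness of the spherical volume -/

/-- The hyperplane section `a^⊥`, the tangent space of the sphere at `a`. -/
abbrev tanSp {n : ℕ} (a : Sph n) : Submodule ℝ (Esp n) := (ℝ ∙ (a : Esp n))ᗮ

/-- The graph parametrisation `v ↦ v + √(1 - ‖v‖²) a` of the hemisphere centred at `a`
over the tangent space at `a`. -/
def graphMap {n : ℕ} (a : Sph n) (v : tanSp a) : Esp n :=
  (v : Esp n) + Real.sqrt (1 - ‖v‖ ^ 2) • (a : Esp n)

lemma sph_norm {n : ℕ} (a : Sph n) : ‖(a : Esp n)‖ = 1 := by simp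

lemma sph_inner_self {n : ℕ} (a : Sph n) : inner ℝ (a : Esp n) (a : Esp n) = 1 := by
  rw [real_inner_self_eq_norm_sq, sph_norm]; norm_num

lemma tanSp_inner {n : ℕ} (a : Sph n) (v : tanSp a) :
    inner ℝ (a : Esp n) (v : Esp n) = 0 :=
  Submodule.mem_orthogonal_singleton_iff_inner_right.mp v.2

lemma graphMap_norm {n : ℕ} (a : Sph n) (v : tanSp a) (hv : ‖v‖ ≤ 1) :
    ‖graphMap a v‖ = 1 := by
  have h0 : (0 : ℝ) ≤ 1 - ‖v‖ ^ 2 := by nlinarith [norm_nonneg v]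
  have h : ‖graphMap a v‖ ^ 2 = 1 := by
    rw [graphMap, norm_add_sq_real, inner_smul_right, real_inner_comm, tanSp_inner,
      norm_smul, sph_norm, Real.norm_eq_abs, mul_one, sq_abs, Real.sq_sqrt h0]
    simp
  nlinarith [norm_nonneg (graphMap a v)]

lemma graphMap_zero {n : ℕ} (a : Sph n) : graphMap a 0 = a := by simp [graphMap]

lemma graphMap_contDiffAt {n : ℕ} (a : Sph n) : ContDiffAt ℝ 1 (graphMap a) 0 := by
  have h1 : ContDiffAt ℝ 1 (fun v : tanSp a => (v : Esp n)) 0 :=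
    (tanSp a).subtypeL.contDiff.contDiffAt
  have h2 : ContDiffAt ℝ 1 (fun v : tanSp a => 1 - ‖v‖ ^ 2) 0 :=
    contDiffAt_const.sub (contDiff_norm_sq ℝ).contDiffAt
  exact h1.add ((h2.sqrt (by simp)).smul contDiffAt_const)

/-- Orthogonal projection of the sphere to the tangent space at `a`. -/
def projTan {n : ℕ} (a : Sph n) (p : Sph n) : tanSp a :=
  (tanSp a).orthogonalProjectionOnto (p : Esp n)

lemma projTan_lipschitz {n : ℕ} (a : Sph n) : LipschitzWith 1 (projTan a) := by
  have := ((tanSp a).lipschitzWith_orthogonalProjectionOnto).comp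
    (LipschitzWith.subtype_val (Metric.sphere (0 : Esp n) 1))
  rw [mul_one] at this
  exact this

lemma projTan_graph {n : ℕ} (a p : Sph n) (v : tanSp a) (h : (p : Esp n) = graphMap a v) :
    projTan a p = v := by
  have ha : (tanSp a).orthogonalProjectionOnto (a : Esp n) = 0 := by
    apply Submodule.orthogonalProjectionOnto_orthogonal_apply_eq_zero
    exact Submodule.mem_span_singleton_self _
  rw [projTan, h, graphMap, map_add, map_smul, ha]
  simp

lemma coe_projTan {n : ℕ} (a p : Sph n) :
    ((projTan a p : tanSp a) : Esp n) = (p : Esp n) - inner ℝ (a : Esp n) (p : Esp n) • (a : Esp n) := by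
  rw [projTan, Submodule.coe_orthogonalProjectionOnto_apply, Submodule.starProjection_orthogonal_val,
    Submodule.starProjection_unit_singleton ℝ (sph_norm a)]

lemma graphMap_projTan {n : ℕ} (a p : Sph n) (h : 0 ≤ inner ℝ (a : Esp n) (p : Esp n)) :
    graphMap a (projTan a p) = p := by
  have h2 : 1 - ‖projTan a p‖ ^ 2 = (inner ℝ (a : Esp n) (p : Esp n)) ^ 2 := by
    rw [Submodule.coe_norm, coe_projTan, norm_sub_sq_real, inner_smul_right, norm_smul,
      sph_norm, sph_norm, real_inner_comm (a : Esp n) (p : Esp n), Real.norm_eq_abs, mul_one, sq_abs]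
    ring
  rw [graphMap, h2, Real.sqrt_sq h, coe_projTan]
  simp

lemma finrank_tanSp {n : ℕ} (a : Sph n) : Module.finrank ℝ (tanSp a) = n := by
  have : Fact (Module.finrank ℝ (Esp n) = n + 1) := ⟨by simp⟩
  exact Submodule.finrank_orthogonal_span_singleton (by
    intro h; have := sph_norm a; rw [h] at this; simp at this)

lemma haar_tanSp {n : ℕ} (a : Sph n) :
    (μH[(n : ℝ)] : Measure (tanSp a)).IsAddHaarMeasure := by
  have h := MeasureTheory.isAddHaarMeasure_hausdorffMeasure (E := tanSp a)
  rwa [finrank_tanSp] at h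

/-- Nonempty open sets have positive volume: the projection to a tangent space is
`1`-Lipschitz and maps them onto a set containing a neighbourhood of `0`. -/
lemma sphVol_pos {n : ℕ} (U : Set (Sph n)) (hU : IsOpen U) (hne : U.Nonempty) :
    0 < sphVol n U := by
  obtain ⟨a, ha⟩ := hne
  obtain ⟨O, hO, rfl⟩ := isOpen_induced_iff.mp hU
  have := haar_tanSp a
  have hV : {v : tanSp a | ‖v‖ ≤ 1 ∧ graphMap a v ∈ O} ∈ nhds 0 := by
    refine Filter.inter_mem ?_ ?_
    · filter_upwards [Metric.closedBall_mem_nhds (0 : tanSp a) one_pos] with v hv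
      exact mem_closedBall_zero_iff.mp hv
    · refine (graphMap_contDiffAt a).continuousAt.preimage_mem_nhds ?_
      rw [graphMap_zero]
      exact hO.mem_nhds ha
  have h1 : 0 < μH[(n : ℝ)] {v : tanSp a | ‖v‖ ≤ 1 ∧ graphMap a v ∈ O} :=
    Measure.measure_pos_of_mem_nhds _ hV
  have h2 := (projTan_lipschitz a).hausdorffMeasure_image_le (d := n) (by positivity)
    (Subtype.val ⁻¹' O)
  simp only [ENNReal.coe_one, ENNReal.one_rpow, one_mul] at h2
  refine h1.trans_le (le_trans (measure_mono ?_) h2)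
  rintro v ⟨hv, hvO⟩
  refine ⟨⟨graphMap a v, by simpa using graphMap_norm a v hv⟩, hvO, projTan_graph _ _ _ rfl⟩

/-- The sphere has finite volume: locally it is a Lipschitz image of a bounded subset of a
tangent space, and it is compact. -/
lemma sphVol_lt_top {n : ℕ} (X : Set (Sph n)) : sphVol n X < ⊤ := by
  have hfin : ∀ a : Sph n, (sphVol n).FiniteAtFilter (nhds a) := by
    intro a
    have := haar_tanSp a
    obtain ⟨K, t, ht, hL⟩ := (graphMap_contDiffAt a).exists_lipschitzOnWith
    set t' := t ∩ Metric.closedBall 0 1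
    have hL' : LipschitzOnWith K (graphMap a) t' := hL.mono Set.inter_subset_left
    have h1 : μH[(n : ℝ)] (graphMap a '' t') < ⊤ := by
      refine (hL'.hausdorffMeasure_image_le (by positivity)).trans_lt ?_
      refine ENNReal.mul_lt_top (ENNReal.rpow_lt_top_of_nonneg (by positivity) (by simp)) ?_
      refine (measure_mono Set.inter_subset_right).trans_lt ?_
      exact (isCompact_closedBall (0 : tanSp a) 1).measure_lt_top
    refine ⟨{p | 0 < inner ℝ (a : Esp n) (p : Esp n)} ∩ projTan a ⁻¹' t', ?_, ?_⟩
    · refine Filter.inter_mem ?_ ?_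
      · refine IsOpen.mem_nhds (isOpen_lt continuous_const (by fun_prop)) ?_
        change 0 < inner ℝ (a : Esp n) (a : Esp n)
        rw [sph_inner_self]
        exact one_pos
      · refine (projTan_lipschitz a).continuous.continuousAt.preimage_mem_nhds ?_
        rw [projTan_graph a a 0 (graphMap_zero a).symm]
        exact Filter.inter_mem ht (Metric.closedBall_mem_nhds _ one_pos)
    · rw [sphVol, ← isometry_subtype_coe.hausdorffMeasure_image (Or.inl (by positivity))]
      refine (measure_mono ?_).trans_lt h1
      rintro _ ⟨p, ⟨hp, hpt⟩, rfl⟩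
      exact ⟨projTan a p, hpt, graphMap_projTan a p (le_of_lt hp)⟩
  have : IsLocallyFiniteMeasure (sphVol n) := ⟨hfin⟩
  exact (measure_mono (Set.subset_univ X)).trans_lt isCompact_univ.measure_lt_top

/-! ### Diameter and points at maximal distance -/

lemma gd_le_iff {n : ℕ} (p q : Sph n) {r : ℝ} (h0 : 0 ≤ r) (hπ : r ≤ Real.pi) :
    gd p q ≤ r ↔ Real.cos r ≤ inner ℝ (p : Esp n) (q : Esp n) := by
  have h := abs_le.mp (abs_real_inner_le_norm (p : Esp n) (q : Esp n))
  rw [sph_norm, sph_norm, mul_one] at h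
  unfold gd
  constructor
  · intro hr
    have := Real.cos_le_cos_of_nonneg_of_le_pi (Real.arccos_nonneg _) hπ hr
    rwa [Real.cos_arccos h.1 h.2] at this
  · intro hr
    have := Real.arccos_le_arccos hr
    rwa [Real.arccos_cos h0 hπ] at this

lemma sphDiam_le_iff {n : ℕ} (X : Set (Sph n)) {D : ℝ} (h0 : 0 ≤ D) (hπ : D ≤ Real.pi) :
    sphDiam X ≤ D ↔
      ∀ p ∈ X, ∀ q ∈ X, Real.cos D ≤ inner ℝ (p : Esp n) (q : Esp n) := by
  unfold sphDiam
  constructor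
  · intro h p hp q hq
    rw [← gd_le_iff p q h0 hπ]
    have hbdd : BddAbove {r | ∃ x ∈ X, ∃ y ∈ X, r = gd x y} := by
      refine ⟨Real.pi, ?_⟩
      rintro _ ⟨p, -, q, -, rfl⟩
      exact Real.arccos_le_pi _
    exact le_trans (le_csSup hbdd ⟨p, hp, q, hq, rfl⟩) h
  · intro h
    refine Real.sSup_le ?_ h0
    rintro _ ⟨p, hp, q, hq, rfl⟩
    exact (gd_le_iff p q h0 hπ).mpr (h p hp q hq)

lemma DMaximal.le {n : ℕ} {D : ℝ} {C : Set (Sph n)} (hC : DMaximal n D C)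
    {X : Set (Sph n)} (hX : IsCompact X) (hd : sphDiam X ≤ D) : sphVol n X ≤ sphVol n C := by
  rw [hC.2.2]
  exact le_sSup ⟨X, hX, hd, rfl⟩

/-- Completeness of volume maximizers: a non-interior point `x` of a maximizer `X` has a point
of `X` at distance exactly `D`. Otherwise a small ball around `x` could be added to `X`. -/
lemma exists_far {n : ℕ} {D : ℝ} (hD0 : Real.pi / 2 < D) (hD1 : D < Real.pi)
    {C X : Set (Sph n)} (hC : DMaximal n D C) (hX : IsCompact X) (hd : sphDiam X ≤ D)
    (hv : sphVol n C ≤ sphVol n X) {x : Sph n} (hx : x ∈ X) (hxi : x ∉ interior X) :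
    ∃ w ∈ X, inner ℝ (x : Esp n) (w : Esp n) = Real.cos D := by
  have hDnn : 0 ≤ D := by linarith [Real.pi_pos]
  have hcos : Real.cos D < 0 :=
    Real.cos_neg_of_pi_div_two_lt_of_lt hD0 (by linarith [Real.pi_pos])
  have hd' := (sphDiam_le_iff X hDnn hD1.le).mp hd
  by_contra! hne
  obtain ⟨w₀, hw₀, hmin⟩ := hX.exists_isMinOn ⟨x, hx⟩
    (f := fun w : Sph n => (inner ℝ (x : Esp n) (w : Esp n) : ℝ)) (by fun_prop)
  have hw₀' : Real.cos D < inner ℝ (x : Esp n) (w₀ : Esp n) :=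
    lt_of_le_of_ne (hd' x hx w₀ hw₀) (hne w₀ hw₀).symm
  set ε : ℝ := inner ℝ (x : Esp n) (w₀ : Esp n) - Real.cos D with hε
  have hεpos : 0 < ε := by linarith
  set δ : ℝ := min ε (1 / 2) with hδ
  have hδpos : 0 < δ := lt_min hεpos (by norm_num)
  have hδε : δ ≤ ε := min_le_left _ _
  have hδ2 : δ ≤ 1 / 2 := min_le_right _ _
  have hcl : IsClosed X := hX.isClosed
  have hpw : ∀ p ∈ Metric.closedBall x δ, ∀ w ∈ X,
      Real.cos D ≤ inner ℝ (p : Esp n) (w : Esp n) := by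
    intro p hp w hw
    have h1 : inner ℝ (x : Esp n) (w₀ : Esp n) ≤ inner ℝ (x : Esp n) (w : Esp n) := hmin hw
    have h2 : ‖(x : Esp n) - p‖ ≤ δ := by
      rw [← dist_eq_norm, dist_comm]; exact hp
    have h3 := real_inner_le_norm ((x : Esp n) - p) (w : Esp n)
    rw [inner_sub_left, sph_norm, mul_one] at h3
    linarith
  have hpp : ∀ p ∈ Metric.closedBall x δ, ∀ q ∈ Metric.closedBall x δ,
      Real.cos D ≤ inner ℝ (p : Esp n) (q : Esp n) := by
    intro p hp q hq
    have h1 : ‖(p : Esp n) - q‖ ≤ 1 := by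
      rw [← dist_eq_norm]
      calc dist (p : Esp n) q ≤ dist (p : Esp n) x + dist (q : Esp n) x := dist_triangle_right _ _ _
        _ ≤ δ + δ := add_le_add hp hq
        _ ≤ 1 := by linarith
    have h2 := norm_sub_sq_real (p : Esp n) (q : Esp n)
    rw [sph_norm, sph_norm] at h2
    nlinarith [norm_nonneg ((p : Esp n) - q)]
  have hY : IsCompact (X ∪ Metric.closedBall x δ) :=
    hX.union (Metric.isClosed_closedBall.isCompact)
  have hYd : sphDiam (X ∪ Metric.closedBall x δ) ≤ D := by
    rw [sphDiam_le_iff _ hDnn hD1.le]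
    rintro p (hp | hp) q (hq | hq)
    · exact hd' p hp q hq
    · rw [real_inner_comm]; exact hpw q hq p hp
    · exact hpw p hp q hq
    · exact hpp p hp q hq
  have hU : IsOpen (Metric.ball x δ \ X) := Metric.isOpen_ball.sdiff hcl
  have hUne : (Metric.ball x δ \ X).Nonempty := by
    rw [Set.sdiff_nonempty]
    intro hsub
    exact hxi (mem_interior.mpr ⟨_, hsub, Metric.isOpen_ball, Metric.mem_ball_self hδpos⟩)
  have hpos := sphVol_pos _ hU hUne
  have h1 : sphVol n X + sphVol n (Metric.ball x δ \ X) ≤ sphVol n X := by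
    rw [← measure_union Set.disjoint_sdiff_right hU.measurableSet]
    refine le_trans (le_trans (measure_mono ?_) (hC.le hY hYd)) hv
    exact Set.union_subset_union_right _ (Set.sdiff_subset.trans Metric.ball_subset_closedBall)
  exact absurd h1 (not_le.mpr (ENNReal.lt_add_right (sphVol_lt_top X).ne hpos.ne'))

lemma curve_norm_sq {n : ℕ} (x : Sph n) {v : Esp n} (hv : inner ℝ (x : Esp n) v = 0) (t : ℝ) :
    ‖(x : Esp n) + t • v‖ ^ 2 = 1 + t ^ 2 * ‖v‖ ^ 2 := by
  rw [norm_add_sq_real, inner_smul_right, hv, sph_norm, norm_smul, mul_pow, Real.norm_eq_abs,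
    sq_abs]
  ring

lemma curve_one_le {n : ℕ} (x : Sph n) {v : Esp n} (hv : inner ℝ (x : Esp n) v = 0) (t : ℝ) :
    1 ≤ ‖(x : Esp n) + t • v‖ := by
  nlinarith [curve_norm_sq x hv t, norm_nonneg ((x : Esp n) + t • v), sq_nonneg (t * ‖v‖)]

lemma curve_le {n : ℕ} (x : Sph n) {v : Esp n} (hv : inner ℝ (x : Esp n) v = 0) (t : ℝ) :
    ‖(x : Esp n) + t • v‖ ≤ 1 + t ^ 2 * ‖v‖ ^ 2 / 2 := by
  nlinarith [curve_norm_sq x hv t, sq_nonneg (‖(x : Esp n) + t • v‖ - 1)]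

/-- The path `t ↦ (x + t v) / ‖x + t v‖` on the sphere through `x` in the tangent direction `v`. -/
def curve {n : ℕ} (x : Sph n) {v : Esp n} (hv : inner ℝ (x : Esp n) v = 0) (t : ℝ) : Sph n :=
  ⟨‖(x : Esp n) + t • v‖⁻¹ • ((x : Esp n) + t • v), by
    have := curve_one_le x hv t
    rw [mem_sphere_zero_iff_norm, norm_smul, norm_inv, norm_norm]
    exact inv_mul_cancel₀ (by linarith)⟩

lemma curve_zero {n : ℕ} (x : Sph n) {v : Esp n} (hv : inner ℝ (x : Esp n) v = 0) :
    curve x hv 0 = x := by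
  apply Subtype.ext
  simp [curve]

lemma curve_continuous {n : ℕ} (x : Sph n) {v : Esp n} (hv : inner ℝ (x : Esp n) v = 0) :
    Continuous (curve x hv) := by
  have h1 : Continuous fun t : ℝ => (x : Esp n) + t • v := by fun_prop
  have h2 : ∀ t : ℝ, ‖(x : Esp n) + t • v‖ ≠ 0 := by
    intro t
    have := curve_one_le x hv t
    linarith
  exact Continuous.subtype_mk ((h1.norm.inv₀ h2).smul h1) _

lemma le_inner_curve_iff {n : ℕ} (x : Sph n) {v : Esp n} (hv : inner ℝ (x : Esp n) v = 0)
    (t c : ℝ) (w : Esp n) :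
    c ≤ inner ℝ (curve x hv t : Esp n) w ↔
      c * ‖(x : Esp n) + t • v‖ ≤ inner ℝ (x : Esp n) w + t * inner ℝ v w := by
  have := curve_one_le x hv t
  rw [curve, real_inner_smul_left, le_inv_mul_iff₀ (by linarith), inner_add_left,
    real_inner_smul_left, mul_comm]

/-- With `s = ‖x + t v‖`, `t = sin r / 2`, this says that the path of direction `v` in `far_unique`
is inside the touching ball at time `t`. -/
lemma enter_ball_ineq {s c b cr sr : ℝ} (hs1 : 1 ≤ s)
    (hs2 : s ≤ 1 + (sr / 2) ^ 2 * (2 * b * c) / 2) (hsr : 0 < sr)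
    (hcr : cr ≤ 1) (hb1 : b ≤ 1) (hc : 0 < c) :
    cr * s ≤ cr + sr / 2 * (sr * c) := by
  have h1 : cr * (s - 1) ≤ s - 1 := by nlinarith
  have h2 : (sr ^ 2 * c) * b ≤ (sr ^ 2 * c) * 1 :=
    mul_le_mul_of_nonneg_left hb1 (by positivity)
  have h3 : 0 < sr ^ 2 * c := by positivity
  nlinarith

/-- With `s = ‖x + t v‖` and `cD = cos D`, this says that the path of direction `v` in `far_unique` is
at time `t` at distance more than `D` from `w`. -/
lemma move_away_ineq {s c b cD t : ℝ} (hs1 : 1 ≤ s)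
    (hs2 : s ≤ 1 + t ^ 2 * (2 * b * c) / 2) (ht : 0 < t) (ht1 : t < 1)
    (hcD1 : -1 ≤ cD) (hb : 0 < b) (hc : 0 < c) (h : cD * s ≤ cD + t * (-(b * c))) : False := by
  have h1 : -cD * (s - 1) ≤ s - 1 := by nlinarith
  have h2 : (t * (b * c)) * t < (t * (b * c)) * 1 :=
    mul_lt_mul_of_pos_left ht1 (by positivity)
  nlinarith

/-- A point of `C` at distance `D` from a strongly regular boundary point `x` lies on the geodesic
leaving `x` in the direction `-N`: otherwise some path from `x` into the touching interior ball
would move away from it, exceeding distance `D`. -/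
lemma far_unique {n : ℕ} {D : ℝ} (hD0 : Real.pi / 2 < D) (hD1 : D < Real.pi)
    {C : Set (Sph n)} (hd : sphDiam C ≤ D) {x w : Sph n} {N : Esp n}
    (hN : ExtUnitNormal C x N) (hw : w ∈ C)
    (hxw : inner ℝ (x : Esp n) (w : Esp n) = Real.cos D) :
    (w : Esp n) = Real.cos D • (x : Esp n) - Real.sin D • N := by
  obtain ⟨hN1, hNx, r, hr, z, hz, hball, hgd, hzeq⟩ := hN
  have hDnn : 0 ≤ D := by linarith [Real.pi_pos]
  have hcos : Real.cos D < 0 :=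
    Real.cos_neg_of_pi_div_two_lt_of_lt hD0 (by linarith [Real.pi_pos])
  have hsD : 0 < Real.sin D := Real.sin_pos_of_pos_of_lt_pi (by linarith [Real.pi_pos]) hD1
  have hcos1 := Real.sin_sq_add_cos_sq D
  have hd' := (sphDiam_le_iff C hDnn hD1.le).mp hd
  have hxC : x ∈ C := hball hgd.le
  have hrπ : r ≤ Real.pi := by rw [← hgd]; exact Real.arccos_le_pi _
  -- for `r = π` the point `z ∈ C` would be antipodal to `x ∈ C`
  have hrlt : r < Real.pi := by
    refine lt_of_le_of_ne hrπ ?_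
    rintro rfl
    have h := hd' x hxC z hz
    rw [hzeq] at h
    simp only [Real.cos_pi, Real.sin_pi, zero_smul, sub_zero, inner_smul_right,
      sph_inner_self] at h
    nlinarith
  have hsr : 0 < Real.sin r := Real.sin_pos_of_pos_of_lt_pi hr hrlt
  -- `q` is the tangential part of `w` at `x`, and the claim is `q = -b N`; otherwise
  -- `v = -(q + b N)` points into the ball and away from `w`
  set b := Real.sin D with hb
  set q : Esp n := (w : Esp n) - Real.cos D • (x : Esp n) with hq
  have hxq : inner ℝ (x : Esp n) q = 0 := by
    rw [hq, inner_sub_right, inner_smul_right, hxw, sph_inner_self]; ring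
  have hqq : ‖q‖ ^ 2 = b ^ 2 := by
    rw [hq, norm_sub_sq_real, inner_smul_right, real_inner_comm, hxw, norm_smul, sph_norm,
      sph_norm, Real.norm_eq_abs, mul_one, sq_abs]
    nlinarith
  have hxN : inner ℝ (x : Esp n) N = 0 := by rw [real_inner_comm]; exact hNx
  have hNN : inner ℝ N N = 1 := by rw [real_inner_self_eq_norm_sq, hN1]; norm_num
  set c := b + inner ℝ q N with hc
  set v : Esp n := -(q + b • N) with hvdef
  have hxv : inner ℝ (x : Esp n) v = 0 := by
    rw [hvdef, inner_neg_right, inner_add_right, inner_smul_right, hxq, hxN]; ring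
  have hvn : ‖v‖ ^ 2 = 2 * b * c := by
    rw [hvdef, norm_neg, norm_add_sq_real, inner_smul_right, norm_smul, hN1, hqq,
      Real.norm_eq_abs, mul_one, sq_abs, hc]
    ring
  have hvN : inner ℝ v N = -c := by
    rw [hvdef, inner_neg_left, inner_add_left, real_inner_smul_left, hNN, hc]; ring
  have hvq : inner ℝ v q = -(b * c) := by
    rw [hvdef, inner_neg_left, inner_add_left, real_inner_smul_left, real_inner_self_eq_norm_sq,
      hqq, real_inner_comm, hc]; ring
  by_cases hv0 : v = 0
  · have h1 : q = -(b • N) := by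
      rw [hvdef, neg_eq_zero] at hv0
      exact eq_neg_of_add_eq_zero_left hv0
    have h2 : (w : Esp n) = Real.cos D • (x : Esp n) + q := by rw [hq]; abel
    rw [h2, h1]; abel
  exfalso
  have hcpos : 0 < c := by
    have : 0 < ‖v‖ ^ 2 := by positivity
    rw [hvn] at this
    by_contra! hneg
    nlinarith
  have hvx : inner ℝ v (x : Esp n) = 0 := by rw [real_inner_comm]; exact hxv
  have hvw : inner ℝ v (w : Esp n) = -(b * c) := by
    have h2 : (w : Esp n) = Real.cos D • (x : Esp n) + q := by rw [hq]; abel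
    rw [h2, inner_add_right, inner_smul_right, hvx, hvq]; ring
  have hvz : inner ℝ v (z : Esp n) = Real.sin r * c := by
    rw [hzeq, inner_sub_right, inner_smul_right, inner_smul_right, hvx, hvN]; ring
  have hxz : inner ℝ (x : Esp n) (z : Esp n) = Real.cos r := by
    rw [hzeq, inner_sub_right, inner_smul_right, inner_smul_right, sph_inner_self, hxN]; ring
  set t := Real.sin r / 2 with ht
  have htpos : 0 < t := by positivity
  have hs1 := curve_one_le x hxv t
  have hs2 := curve_le x hxv t
  rw [hvn] at hs2
  set s := ‖(x : Esp n) + t • v‖ with hs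
  have hin : curve x hxv t ∈ C := by
    apply hball
    change gd _ _ ≤ r
    rw [gd_le_iff _ _ hr.le hrπ, le_inner_curve_iff, hxz, hvz]
    exact enter_ball_ineq hs1 hs2 hsr (Real.cos_le_one r) (Real.sin_le_one D) hcpos
  have h := hd' _ hin _ hw
  rw [le_inner_curve_iff, hxw, hvw] at h
  exact move_away_ineq hs1 hs2 htpos (by linarith [Real.sin_le_one r])
    (Real.neg_one_le_cos D) hsD hcpos h

/-! ### Two-point symmetrization -/

/-- Reflection of the sphere in the hyperplane orthogonal to `u`. -/
def mir {n : ℕ} (u : Esp n) (p : Sph n) : Sph n :=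
  ⟨(ℝ ∙ u)ᗮ.reflection (p : Esp n), by
    rw [mem_sphere_zero_iff_norm, LinearIsometryEquiv.norm_map, sph_norm]⟩

lemma refl_apply {n : ℕ} (u v : Esp n) :
    (ℝ ∙ u)ᗮ.reflection v = v - (2 * (inner ℝ u v / ‖u‖ ^ 2)) • u := by
  rw [Submodule.reflection_orthogonal_apply, Submodule.reflection_singleton_apply, neg_sub,
    two_mul, add_smul, two_smul]
  simp

lemma mir_mir {n : ℕ} (u : Esp n) (p : Sph n) : mir u (mir u p) = p :=
  Subtype.ext (Submodule.reflection_reflection _ _)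

lemma mir_isometry {n : ℕ} (u : Esp n) : Isometry (mir u) := by
  refine Isometry.of_dist_eq fun p q => ?_
  exact ((ℝ ∙ u)ᗮ.reflection).dist_map (p : Esp n) (q : Esp n)

lemma inner_mir_mir {n : ℕ} (u : Esp n) (p q : Sph n) :
    inner ℝ (mir u p : Esp n) (mir u q : Esp n) = inner ℝ (p : Esp n) (q : Esp n) :=
  LinearIsometryEquiv.inner_map_map _ _ _

lemma inner_mir_right {n : ℕ} (u : Esp n) (p q : Sph n) :
    inner ℝ (p : Esp n) (mir u q : Esp n) = inner ℝ (p : Esp n) (q : Esp n)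
      - 2 * (inner ℝ u (p : Esp n) * inner ℝ u (q : Esp n) / ‖u‖ ^ 2) := by
  change inner ℝ (p : Esp n) ((ℝ ∙ u)ᗮ.reflection (q : Esp n)) = _
  rw [refl_apply, inner_sub_right, inner_smul_right, real_inner_comm (p : Esp n) u]
  ring

lemma inner_u_mir {n : ℕ} (u : Esp n) (p : Sph n) :
    inner ℝ u (mir u p : Esp n) = -inner ℝ u (p : Esp n) := by
  have h := LinearIsometryEquiv.inner_map_map (ℝ ∙ u)ᗮ.reflection u (p : Esp n)
  rw [Submodule.reflection_orthogonalComplement_singleton_eq_neg, inner_neg_left] at h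
  change inner ℝ u ((ℝ ∙ u)ᗮ.reflection (p : Esp n)) = _
  linarith

/-- Two-point symmetrization (polarization) of `C` towards the half-sphere `⟨u, p⟩ ≥ 0`: from each
pair of mirror points meeting `C` in exactly one point, the one in that half-sphere is kept. -/
def polarize {n : ℕ} (u : Esp n) (C : Set (Sph n)) : Set (Sph n) :=
  (C ∩ mir u ⁻¹' C) ∪ ({p | 0 ≤ inner ℝ u (p : Esp n)} ∩ (C ∪ mir u ⁻¹' C))

lemma polarize_isCompact {n : ℕ} (u : Esp n) {C : Set (Sph n)} (hC : IsCompact C) :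
    IsCompact (polarize u C) := by
  have h1 := hC.isClosed
  have h2 : IsClosed (mir u ⁻¹' C) := h1.preimage (mir_isometry u).continuous
  have h3 : IsClosed {p : Sph n | 0 ≤ inner ℝ u (p : Esp n)} :=
    isClosed_le continuous_const (by fun_prop)
  exact ((h1.inter h2).union (h3.inter (h1.union h2))).isCompact

lemma polarize_mono_pair {n : ℕ} {u : Esp n} {C : Set (Sph n)} {k : ℝ}
    (hd : ∀ p ∈ C, ∀ q ∈ C, k ≤ inner ℝ (p : Esp n) (q : Esp n)) {p q : Sph n}
    (hp : 0 ≤ inner ℝ u (p : Esp n)) (hq : 0 ≤ inner ℝ u (q : Esp n))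
    (hpC : p ∈ C) (hqC : mir u q ∈ C) : k ≤ inner ℝ (p : Esp n) (q : Esp n) := by
  have h := hd p hpC _ hqC
  rw [inner_mir_right] at h
  have : 0 ≤ inner ℝ u (p : Esp n) * inner ℝ u (q : Esp n) / ‖u‖ ^ 2 := by positivity
  linarith

/-- Polarization does not increase the diameter. -/
lemma polarize_diam {n : ℕ} {u : Esp n} {C : Set (Sph n)} {k : ℝ}
    (hd : ∀ p ∈ C, ∀ q ∈ C, k ≤ inner ℝ (p : Esp n) (q : Esp n)) :
    ∀ p ∈ polarize u C, ∀ q ∈ polarize u C, k ≤ inner ℝ (p : Esp n) (q : Esp n) := by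
  have hm : ∀ p q : Sph n, mir u p ∈ C → mir u q ∈ C → k ≤ inner ℝ (p : Esp n) (q : Esp n) := by
    intro p q hp hq
    rw [← inner_mir_mir u]
    exact hd _ hp _ hq
  rintro p (⟨hp, hp'⟩ | ⟨hp0, hp | hp⟩) q (⟨hq, hq'⟩ | ⟨hq0, hq | hq⟩)
  · exact hd p hp q hq
  · exact hd p hp q hq
  · exact hm p q hp' hq
  · exact hd p hp q hq
  · exact hd p hp q hq
  · exact polarize_mono_pair hd hp0 hq0 hp hq
  · exact hm p q hp hq'
  · rw [real_inner_comm]; exact polarize_mono_pair hd hq0 hp0 hq hp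
  · exact hm p q hp hq

/-- Polarization does not decrease the volume: the part of `C` that is lost is the mirror image of
a part that is gained. -/
lemma polarize_vol {n : ℕ} (u : Esp n) {C : Set (Sph n)} (hC : IsCompact C) :
    sphVol n C ≤ sphVol n (polarize u C) := by
  have hm := (mir_isometry u).continuous.measurable
  have hCm := hC.isClosed.measurableSet
  have hCm' : MeasurableSet (mir u ⁻¹' C) := hm hCm
  have hP := (polarize_isCompact u hC).isClosed.measurableSet
  have hsub : mir u '' (C \ polarize u C) ⊆ polarize u C \ C := by
    rintro _ ⟨p, ⟨hp, hpn⟩, rfl⟩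
    have h0 : inner ℝ u (p : Esp n) < 0 := by
      by_contra! h0
      exact hpn (Or.inr ⟨h0, Or.inl hp⟩)
    have h1 : mir u p ∉ C := fun h1 => hpn (Or.inl ⟨hp, h1⟩)
    refine ⟨Or.inr ⟨?_, Or.inr ?_⟩, h1⟩
    · change 0 ≤ inner ℝ u (mir u p : Esp n)
      rw [inner_u_mir]; linarith
    · change mir u (mir u p) ∈ C
      rwa [mir_mir]
  have himg : sphVol n (mir u '' (C \ polarize u C)) = sphVol n (C \ polarize u C) :=
    (mir_isometry u).hausdorffMeasure_image (Or.inl (by positivity)) _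
  calc sphVol n C = sphVol n (C ∩ polarize u C) + sphVol n (C \ polarize u C) :=
        (measure_inter_add_sdiff C hP).symm
    _ ≤ sphVol n (polarize u C ∩ C) + sphVol n (polarize u C \ C) := by
        rw [Set.inter_comm, ← himg]
        gcongr
    _ = sphVol n (polarize u C) := measure_inter_add_sdiff _ hCm

/-- With `k = cos D` and `b = sin D`, the points `k x - b N` and `k x - b M` lie at distance `D` from
`x` in the directions `-N` and `-M`. If every point of `Y` is within distance `D` of one of them,
then `x` is not interior to `Y` unless `N = -M`: moving from `x` in the direction `N + M` increases
both distances. -/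
lemma not_interior {n : ℕ} {k b : ℝ} (hk1 : -1 ≤ k) (hb : 0 < b)
    {Y : Set (Sph n)} {x : Sph n} {N M : Esp n} (hN : ‖N‖ = 1) (hM : ‖M‖ = 1)
    (hxN : inner ℝ (x : Esp n) N = 0) (hxM : inner ℝ (x : Esp n) M = 0) (hne : N ≠ -M)
    (hY : ∀ p ∈ Y, k ≤ inner ℝ (p : Esp n) (k • (x : Esp n) - b • N) ∨
      k ≤ inner ℝ (p : Esp n) (k • (x : Esp n) - b • M)) : x ∉ interior Y := by
  intro hx
  have hxv : inner ℝ (x : Esp n) (N + M) = 0 := by rw [inner_add_right, hxN, hxM]; ring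
  have hvx : inner ℝ (N + M) (x : Esp n) = 0 := by rw [real_inner_comm]; exact hxv
  set a : ℝ := 1 + inner ℝ N M with ha
  have hvn : ‖N + M‖ ^ 2 = 2 * a := by
    rw [norm_add_sq_real, hN, hM, ha]; ring
  have hvN : inner ℝ (N + M) N = a := by
    rw [inner_add_left, real_inner_self_eq_norm_sq, hN, real_inner_comm, ha]; ring
  have hvM : inner ℝ (N + M) M = a := by
    rw [inner_add_left, real_inner_self_eq_norm_sq, hM, ha]; ring
  have hv0 : N + M ≠ 0 := fun h => hne (eq_neg_of_add_eq_zero_left h)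
  have hapos : 0 < a := by
    have : 0 < ‖N + M‖ ^ 2 := by positivity
    linarith
  have hev : ∀ᶠ t in nhdsWithin (0 : ℝ) (Set.Ioi 0), curve x hxv t ∈ Y := by
    have h : Filter.Tendsto (curve x hxv) (nhds 0) (nhds x) := by
      have := (curve_continuous x hxv).tendsto 0
      rwa [curve_zero] at this
    exact (h.mono_left nhdsWithin_le_nhds).eventually (mem_interior_iff_mem_nhds.mp hx)
  have hev2 : ∀ᶠ t in nhdsWithin (0 : ℝ) (Set.Ioi 0), t ∈ Set.Ioo 0 b :=
    Ioo_mem_nhdsGT hb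
  obtain ⟨t, htY, ht0, htb⟩ := (hev.and hev2).exists
  have hs1 := curve_one_le x hxv t
  have hs2 := curve_le x hxv t
  rw [hvn] at hs2
  have key : ¬ k * ‖(x : Esp n) + t • (N + M)‖ ≤ k + t * (-(b * a)) := by
    intro h
    set s := ‖(x : Esp n) + t • (N + M)‖
    have h1 : -k * (s - 1) ≤ s - 1 := by nlinarith
    have h2 : (t * a) * t < (t * a) * b := mul_lt_mul_of_pos_left htb (by positivity)
    nlinarith
  have hin : ∀ L : Esp n, inner ℝ (x : Esp n) L = 0 → inner ℝ (N + M) L = a →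
      ¬ k ≤ inner ℝ (curve x hxv t : Esp n) (k • (x : Esp n) - b • L) := by
    intro L hxL hvL h
    rw [le_inner_curve_iff, inner_sub_right, inner_sub_right, inner_smul_right,
      inner_smul_right, inner_smul_right, inner_smul_right, hxL, hvL, hvx, sph_inner_self] at h
    apply key
    linarith
  rcases hY _ htY with h | h
  · exact hin N hxN hvN h
  · exact hin M hxM hvM h

/-- at two distinct strongly regular boundary points of a solid
`D`-maximal set (`π/2 < D < π`), the exterior unit normals satisfy
`N_x − η·N_y = λ·(x − y)` for some sign `η` and some `λ ∈ ℝ`. -/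
theorem DMaximal_normals_relation (n : ℕ) (hn : 2 ≤ n) (D : ℝ)
    (hD0 : Real.pi / 2 < D) (hD1 : D < Real.pi) (C : Set (Sph n))
    (hC : DMaximal n D C) (hCsolid : Solid C) (x y : Sph n) (hxy : x ≠ y)
    (hx : StronglyRegular C x) (hy : StronglyRegular C y)
    (Nx Ny : Esp n) (hNx : ExtUnitNormal C x Nx) (hNy : ExtUnitNormal C y Ny) :
    ∃ η : ℝ, (η = -1 ∨ η = 1) ∧
      ∃ lam : ℝ, Nx - η • Ny = lam • ((x : Esp n) - (y : Esp n)) := by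
  have hDnn : 0 ≤ D := by linarith [Real.pi_pos]
  have hcos : Real.cos D < 0 :=
    Real.cos_neg_of_pi_div_two_lt_of_lt hD0 (by linarith [Real.pi_pos])
  have hsD : 0 < Real.sin D := Real.sin_pos_of_pos_of_lt_pi (by linarith [Real.pi_pos]) hD1
  have hdiam := hC.2.1
  have hd := (sphDiam_le_iff C hDnn hD1.le).mp hdiam
  have hcl : IsClosed C := hC.1.isClosed
  have hxC : x ∈ C := hcl.frontier_subset hx.1
  have hyC : y ∈ C := hcl.frontier_subset hy.1
  obtain ⟨x', hx'C, hx'⟩ := exists_far hD0 hD1 hC hC.1 hdiam le_rfl hxC hx.1.2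
  obtain ⟨y', hy'C, hy'⟩ := exists_far hD0 hD1 hC hC.1 hdiam le_rfl hyC hy.1.2
  have hx'eq := far_unique hD0 hD1 hdiam hNx hx'C hx'
  have hy'eq := far_unique hD0 hD1 hdiam hNy hy'C hy'
  set u : Esp n := (x : Esp n) - (y : Esp n) with hu
  set R := (ℝ ∙ u)ᗮ.reflection with hR
  have hRx : R (x : Esp n) = y := Submodule.reflection_sub (by rw [sph_norm, sph_norm])
  have hRy : R (y : Esp n) = x := by
    rw [← hRx]; exact Submodule.reflection_reflection _ _
  have hmx : mir u x = y := Subtype.ext hRx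
  have hmy : mir u y = x := by rw [← hmx, mir_mir]
  -- it suffices that the reflection maps `Ny` to `± Nx`
  suffices h : ∃ η : ℝ, (η = -1 ∨ η = 1) ∧ Nx = η • R Ny by
    obtain ⟨η, hη, h⟩ := h
    refine ⟨η, hη, -(η * (2 * (inner ℝ u Ny / ‖u‖ ^ 2))), ?_⟩
    rw [h, hR, refl_apply, smul_sub, smul_smul, neg_smul]
    abel
  by_cases hopp : Nx = -R Ny
  · exact ⟨-1, Or.inl rfl, by rw [hopp]; simp⟩
  refine ⟨1, Or.inr rfl, ?_⟩
  rw [one_smul]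
  set T := polarize u C with hT
  have hTc : IsCompact T := polarize_isCompact u hC.1
  have hTd : ∀ p ∈ T, ∀ q ∈ T, Real.cos D ≤ inner ℝ (p : Esp n) (q : Esp n) := polarize_diam hd
  have hxT : x ∈ T := Or.inl ⟨hxC, by change mir u x ∈ C; rwa [hmx]⟩
  have hyT : y ∈ T := Or.inl ⟨hyC, by change mir u y ∈ C; rwa [hmy]⟩
  have hxN : inner ℝ (x : Esp n) Nx = 0 := by rw [real_inner_comm]; exact hNx.2.1
  have hxM : inner ℝ (x : Esp n) (R Ny) = 0 := by
    rw [← hRy, LinearIsometryEquiv.inner_map_map, real_inner_comm]; exact hNy.2.1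
  have hxi : x ∉ interior T := by
    refine not_interior (Real.neg_one_le_cos D) hsD hNx.1
      (by rw [LinearIsometryEquiv.norm_map]; exact hNy.1) hxN hxM hopp ?_
    intro p hp
    have hp' : p ∈ C ∨ mir u p ∈ C := by
      rcases hp with ⟨hp, -⟩ | ⟨-, hp⟩
      · exact Or.inl hp
      · exact hp
    refine hp'.imp (fun h => ?_) (fun h => ?_)
    · rw [← hx'eq]; exact hd p h x' hx'C
    · have h1 := hd _ h y' hy'C
      have h2 : Real.cos D • (x : Esp n) - Real.sin D • R Ny = mir u y' := by
        change _ = R (y' : Esp n)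
        rw [hy'eq, map_sub, map_smul, map_smul, hRy]
      rw [h2, ← inner_mir_mir u, mir_mir]
      exact h1
  obtain ⟨w, hwT, hw⟩ := exists_far hD0 hD1 hC hTc ((sphDiam_le_iff T hDnn hD1.le).mpr hTd)
    (polarize_vol u hC.1) hxT hxi
  -- `w` lies on the side of `y`, since otherwise it would be further than `D` from `y`
  have hwu : inner ℝ u (w : Esp n) ≤ 0 := by
    have := hTd y hyT w hwT
    rw [hu, inner_sub_left, hw]
    linarith
  have hwC : w ∈ C ∧ mir u w ∈ C := by
    rcases hwT with h | ⟨h0, h⟩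
    · exact h
    · have h0' : inner ℝ u (w : Esp n) = 0 := le_antisymm hwu h0
      have hfix : mir u w = w := by
        apply Subtype.ext
        change (ℝ ∙ u)ᗮ.reflection (w : Esp n) = w
        rw [refl_apply, h0']; simp
      rcases h with h | h
      · exact ⟨h, by rwa [hfix]⟩
      · have h' : mir u w ∈ C := h
        exact ⟨by rwa [hfix] at h', h'⟩
  have hw1 := far_unique hD0 hD1 hdiam hNx hwC.1 hw
  have hw2 := far_unique hD0 hD1 hdiam hNy hwC.2 (by rw [← hmx, inner_mir_mir]; exact hw)
  have hw3 : (w : Esp n) = Real.cos D • (x : Esp n) - Real.sin D • R Ny := by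
    have h : R (mir u w : Esp n) = w := Submodule.reflection_reflection _ _
    rw [← h, hw2, map_sub, map_smul, map_smul, hRy]
  rw [hw1] at hw3
  exact smul_right_injective _ hsD.ne' (sub_right_injective hw3)
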